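/- arXiv:1610.03083 — 4 statements merged into one kernel-verified Lean document; each statement's English description precedes it below -/
import Mathlib

section
/- d metrizes vague convergence in M: for μ, μ₁, μ₂, … ∈ M, μₙ converges vaguely to μ as n → ∞ if and only if d(μₙ, μ) → 0 as n → ∞. -/
open MeasureTheory Filter Set

/-- The Lévy distance between two (nondecreasing) functions `F G : ℝ → ℝ`. -/
noncomputable def levyDist (F G : ℝ → ℝ) : ℝ :=
  sInf {h : ℝ | 0 ≤ h ∧ ∀ x : ℝ, F (x - h) - h ≤ G x ∧ G x ≤ F (x + h) + h}

/-- The distribution function of a measure on ℝ. -/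
noncomputable def distFun (μ : Measure ℝ) (s : ℝ) : ℝ := (μ (Iic s)).toReal

/-- The continuous "tent" function equal to `1` on `(-∞, a]`, `0` on `[b, ∞)` and affine
in between. -/
noncomputable def fTrunc (a b x : ℝ) : ℝ :=
  if x ≤ a then 1 else if b ≤ x then 0 else (b - x) / (b - a)

/-- The `k`-th truncation `μ^(k)` of a measure `μ` relative to the sequence `t`. -/
noncomputable def truncMeas (t : ℕ → ℝ) (k : ℕ) (μ : Measure ℝ) : Measure ℝ :=
  μ.withDensity (fun x => ENNReal.ofReal (fTrunc (t (k - 1)) (t k) x))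

/-- `d(μ,ν) = Σ_{k=1}^∞ 2^{-k} d_L(μ^(k), ν^(k)) / (1 + d_L(μ^(k), ν^(k)))`. -/
noncomputable def metD (t : ℕ → ℝ) (μ ν : Measure ℝ) : ℝ :=
  ∑' k : ℕ, ((2 : ℝ)⁻¹ ^ (k + 1)) *
    (levyDist (distFun (truncMeas t (k + 1) μ)) (distFun (truncMeas t (k + 1) ν)) /
      (1 + levyDist (distFun (truncMeas t (k + 1) μ)) (distFun (truncMeas t (k + 1) ν))))

open scoped Topology ENNReal

lemma aux_finOnCompacts (μ : Measure ℝ) (hμ : ∀ s : ℝ, μ (Iic s) < ⊤) :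
    IsFiniteMeasureOnCompacts μ := by
  refine ⟨fun K hK => ?_⟩
  obtain ⟨c, hc⟩ := hK.bddAbove
  exact lt_of_le_of_lt (measure_mono (fun x hx => hc hx)) (hμ c)

lemma aux_formula (μ : Measure ℝ) (hμ : ∀ s : ℝ, μ (Iic s) < ⊤) (a b : ℝ) (hab : a < b) (s : ℝ) :
    (μ.withDensity (fun x => ENNReal.ofReal (fTrunc a b x))) (Iic s) =
      (ENNReal.ofReal (b - a))⁻¹ * ∫⁻ u in Ioc a b, μ (Iic (min s u)) := by
  have := aux_finOnCompacts μ hμ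
  have hpos : 0 < b - a := sub_pos.2 hab
  have h1 : ∀ x, ENNReal.ofReal (fTrunc a b x) = (ENNReal.ofReal (b - a))⁻¹ *
      ∫⁻ u in Ioc a b, ({p : ℝ × ℝ | p.1 ≤ p.2}.indicator 1 (x, u) : ℝ≥0∞) := by
    intro x
    have e : ∀ u : ℝ, ({p : ℝ × ℝ | p.1 ≤ p.2}.indicator 1 (x, u) : ℝ≥0∞)
        = (Ici x).indicator 1 u := by
      intro u; simp [indicator]
    simp_rw [e]
    rw [lintegral_indicator_one measurableSet_Ici, Measure.restrict_apply measurableSet_Ici,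
      ← ENNReal.ofReal_inv_of_pos hpos]
    unfold fTrunc
    split_ifs with h h'
    · have : Ici x ∩ Ioc a b = Ioc a b := by
        ext u; simp only [mem_inter_iff, mem_Ici, mem_Ioc]; constructor
        · exact fun h => h.2
        · intro h2; exact ⟨by linarith [h2.1], h2⟩
      rw [this, Real.volume_Ioc, ← ENNReal.ofReal_mul (by positivity), inv_mul_cancel₀ hpos.ne']
    · have : volume (Ici x ∩ Ioc a b) = 0 := by
        refine measure_mono_null (t := {b}) ?_ (by simp)
        intro u hu
        simp only [mem_inter_iff, mem_Ici, mem_Ioc] at hu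
        simp only [mem_singleton_iff]; linarith [hu.1, hu.2.2]
      simp [this]
    · have : Ici x ∩ Ioc a b = Icc x b := by
        ext u; simp only [mem_inter_iff, mem_Ici, mem_Ioc, mem_Icc]; constructor
        · exact fun h => ⟨h.1, h.2.2⟩
        · intro h2; exact ⟨h2.1, by linarith [h2.1], h2.2⟩
      rw [this, Real.volume_Icc, ← ENNReal.ofReal_mul (by positivity)]
      congr 1; field_simp
  have hm : Measurable ({p : ℝ × ℝ | p.1 ≤ p.2}.indicator (1 : ℝ × ℝ → ℝ≥0∞)) :=
    measurable_one.indicator (measurableSet_le measurable_fst measurable_snd)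
  rw [withDensity_apply _ measurableSet_Iic]
  simp_rw [h1]
  rw [lintegral_const_mul' _ _ (by simp [hab])]
  congr 1
  rw [lintegral_lintegral_swap (by exact hm.aemeasurable)]
  refine lintegral_congr fun u => ?_
  have e : ∀ x : ℝ, ({p : ℝ × ℝ | p.1 ≤ p.2}.indicator 1 (x, u) : ℝ≥0∞)
        = (Iic u).indicator 1 x := by
      intro u; simp [indicator]
  simp_rw [e]
  rw [lintegral_indicator_one measurableSet_Iic, Measure.restrict_apply measurableSet_Iic,
    Iic_inter_Iic, inf_comm]

lemma aux_le (μ : Measure ℝ) (hμ : ∀ s : ℝ, μ (Iic s) < ⊤) (a b : ℝ) (hab : a < b) (s c : ℝ)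
    (hc : s ≤ c ∨ b ≤ c) :
    (μ.withDensity (fun x => ENNReal.ofReal (fTrunc a b x))) (Iic s) ≤ μ (Iic c) := by
  have hpos : 0 < b - a := sub_pos.2 hab
  rw [aux_formula μ hμ a b hab s]
  calc _ ≤ (ENNReal.ofReal (b - a))⁻¹ * ∫⁻ u in Ioc a b, μ (Iic c) := by
        gcongr 1
        refine setLIntegral_mono measurable_const fun u hu => ?_
        refine measure_mono (Iic_subset_Iic.2 ?_)
        rcases hc with h | h
        · exact (min_le_left _ _).trans h
        · exact (min_le_right _ _).trans (hu.2.trans h)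
    _ = _ := by
        rw [setLIntegral_const, Real.volume_Ioc, mul_comm, mul_assoc,
          ENNReal.mul_inv_cancel (by simpa using hab) (by simp), mul_one]

lemma aux_eq (μ : Measure ℝ) (hμ : ∀ s : ℝ, μ (Iic s) < ⊤) (a b : ℝ) (hab : a < b) (s : ℝ)
    (hs : s ≤ a) :
    (μ.withDensity (fun x => ENNReal.ofReal (fTrunc a b x))) (Iic s) = μ (Iic s) := by
  have hpos : 0 < b - a := sub_pos.2 hab
  rw [aux_formula μ hμ a b hab s]
  have : ∫⁻ u in Ioc a b, μ (Iic (min s u)) = ∫⁻ u in Ioc a b, μ (Iic s) := by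
    refine setLIntegral_congr_fun measurableSet_Ioc fun u hu => ?_
    rw [min_eq_left (hs.trans hu.1.le)]
  rw [this, setLIntegral_const, Real.volume_Ioc, mul_comm, mul_assoc,
          ENNReal.mul_inv_cancel (by simpa using hab) (by simp), mul_one]

lemma aux_const (μ : Measure ℝ) (hμ : ∀ s : ℝ, μ (Iic s) < ⊤) (a b : ℝ) (hab : a < b) (s : ℝ)
    (hs : b ≤ s) :
    (μ.withDensity (fun x => ENNReal.ofReal (fTrunc a b x))) (Iic s) =
    (μ.withDensity (fun x => ENNReal.ofReal (fTrunc a b x))) (Iic b) := by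
  rw [aux_formula μ hμ a b hab s, aux_formula μ hμ a b hab b]
  congr 1
  refine setLIntegral_congr_fun measurableSet_Ioc fun u hu => ?_
  rw [min_eq_right (hu.2.trans hs), min_eq_right hu.2]

lemma aux_countable (μ : Measure ℝ) (hμ : ∀ s : ℝ, μ (Iic s) < ⊤) :
    {s : ℝ | μ {s} ≠ 0}.Countable := by
  have := aux_finOnCompacts μ hμ
  have := Measure.countable_meas_level_set_pos (μ := μ) (g := (id : ℝ → ℝ)) measurable_id
  simpa [pos_iff_ne_zero] using this

lemma aux_exists (μ : Measure ℝ) (hμ : ∀ s : ℝ, μ (Iic s) < ⊤) (a b : ℝ) (hab : a < b) :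
    ∃ p, a < p ∧ p < b ∧ μ {p} = 0 := by
  have hd := (aux_countable μ hμ).dense_compl ℝ
  obtain ⟨p, hp, h1⟩ := hd.exists_between hab
  exact ⟨p, h1.1, h1.2, by simpa using hp⟩

lemma aux_conv (μ : Measure ℝ) (μs : ℕ → Measure ℝ)
    (hμ : ∀ s : ℝ, μ (Iic s) < ⊤) (hμs : ∀ n : ℕ, ∀ s : ℝ, μs n (Iic s) < ⊤)
    (h : ∀ s : ℝ, μ {s} = 0 →
        Tendsto (fun n : ℕ => distFun (μs n) s) atTop (nhds (distFun μ s)))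
    (a b : ℝ) (hab : a < b) (s : ℝ) (hs : μ {s} = 0) :
    Tendsto (fun n => distFun ((μs n).withDensity (fun x => ENNReal.ofReal (fTrunc a b x))) s)
      atTop (𝓝 (distFun (μ.withDensity (fun x => ENNReal.ofReal (fTrunc a b x))) s)) := by
  have h' : ∀ s : ℝ, μ {s} = 0 →
        Tendsto (fun n : ℕ => μs n (Iic s)) atTop (nhds (μ (Iic s))) := by
    intro s hs
    exact (ENNReal.tendsto_toReal_iff (fun n => (hμs n s).ne) (hμ s).ne).1 (h s hs)
  unfold distFun
  refine (ENNReal.tendsto_toReal_iff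
    (fun n => ((aux_le _ (hμs n) a b hab s s (Or.inl le_rfl)).trans_lt (hμs n s)).ne)
    ((aux_le _ hμ a b hab s s (Or.inl le_rfl)).trans_lt (hμ s)).ne).2 ?_
  rw [aux_formula μ hμ a b hab s]
  simp_rw [fun n => aux_formula (μs n) (hμs n) a b hab s]
  refine ENNReal.Tendsto.const_mul ?_ (Or.inr (by simp [hab]))
  refine tendsto_lintegral_filter_of_dominated_convergence (fun _ => μ (Iic s) + 1) ?_ ?_ ?_ ?_
  · refine Eventually.of_forall fun n => Monotone.measurable ?_
    intro u v huv
    exact measure_mono (Iic_subset_Iic.2 (min_le_min_left _ huv))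
  · have : μ (Iic s) < μ (Iic s) + 1 := ENNReal.lt_add_right (hμ s).ne one_ne_zero
    filter_upwards [(h' s hs).eventually (gt_mem_nhds this)] with n hn
    refine Eventually.of_forall fun u => ?_
    exact (measure_mono (Iic_subset_Iic.2 (min_le_left _ _))).trans hn.le
  · rw [setLIntegral_const, Real.volume_Ioc]
    exact ENNReal.mul_ne_top (by simp [(hμ s).ne]) (by simp)
  · refine ae_restrict_of_ae ?_
    have h0 : volume {s : ℝ | μ {s} ≠ 0} = 0 := (aux_countable μ hμ).measure_zero _
    have : ∀ᵐ u : ℝ, μ {u} = 0 := by rw [ae_iff]; exact h0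
    filter_upwards [this] with u hu
    rcases min_choice s u with e | e <;> rw [e]
    · exact h' s hs
    · exact h' u hu

lemma aux_levy_le (F G : ℝ → ℝ) (h : ℝ) (h0 : 0 ≤ h)
    (H : ∀ x : ℝ, F (x - h) - h ≤ G x ∧ G x ≤ F (x + h) + h) : levyDist F G ≤ h :=
  csInf_le ⟨0, fun _ hx => hx.1⟩ ⟨h0, H⟩

lemma aux_levy_nonneg (F G : ℝ → ℝ) : 0 ≤ levyDist F G :=
  Real.sInf_nonneg fun _ hx => hx.1

lemma aux_levy_lt (F G : ℝ → ℝ) (hF : Monotone F) (h : ℝ)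
    (hF0 : ∀ x, 0 ≤ F x) (hG0 : ∀ x, 0 ≤ G x) (C : ℝ) (hFC : ∀ x, F x ≤ C) (hGC : ∀ x, G x ≤ C)
    (hlt : levyDist F G < h) : 
    ∀ x : ℝ, F (x - h) - h ≤ G x ∧ G x ≤ F (x + h) + h := by
  have hne : {h : ℝ | 0 ≤ h ∧ ∀ x : ℝ, F (x - h) - h ≤ G x ∧ G x ≤ F (x + h) + h}.Nonempty := by
    refine ⟨C, (hF0 0).trans (hFC 0), fun x => ⟨?_, ?_⟩⟩
    · linarith [hFC (x - C), hG0 x]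
    · linarith [hF0 (x + C), hGC x]
  obtain ⟨k, hk, hkh⟩ := exists_lt_of_csInf_lt hne hlt
  intro x
  have h1 := hF (show x - h ≤ x - k by linarith)
  have h2 := hF (show x + k ≤ x + h by linarith)
  have := hk.2 x
  constructor <;> linarith

lemma aux_levy_tendsto (Fs : ℕ → ℝ → ℝ) (F : ℝ → ℝ) (hFs : ∀ n, Monotone (Fs n)) (hF : Monotone F)
    (hFs0 : ∀ n x, 0 ≤ Fs n x) (hF0 : ∀ x, 0 ≤ F x) (D : Set ℝ)
    (hD : ∀ a b : ℝ, a < b → ∃ p, a < p ∧ p < b ∧ p ∈ D)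
    (hconv : ∀ p ∈ D, Tendsto (fun n => Fs n p) atTop (𝓝 (F p)))
    (b : ℝ) (hFsb : ∀ n x, b ≤ x → Fs n x = Fs n b) (hFb : ∀ x, b ≤ x → F x = F b)
    (hbot : Tendsto F atBot (𝓝 0)) :
    Tendsto (fun n => levyDist (Fs n) F) atTop (𝓝 0) := by
  have key : ∀ ε : ℝ, 0 < ε → ∀ᶠ n in atTop, ∀ x : ℝ,
      Fs n (x - ε) - ε ≤ F x ∧ F x ≤ Fs n (x + ε) + ε := by
    intro ε hε
    obtain ⟨A0, hA0⟩ := (hbot.eventually (gt_mem_nhds (show (0:ℝ) < ε / 2 by linarith))).exists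
    obtain ⟨A, -, hA1, hAD⟩ := hD (A0 - 1) A0 (by linarith)
    have hA : F A < ε / 2 := (hF hA1.le).trans_lt hA0
    obtain ⟨B, hB1, -, hBD⟩ := hD b (b + 1) (by linarith)
    have near : ∀ p ∈ D, ∀ᶠ n in atTop, Fs n p < F p + ε / 2 ∧ F p - ε / 2 < Fs n p := by
      intro p hp
      exact ((hconv p hp).eventually (gt_mem_nhds (by linarith))).and
        ((hconv p hp).eventually (lt_mem_nhds (by linarith)))
    have hcomp : ∀ᶠ n in atTop, ∀ x ∈ Icc A B,
        Fs n (x - ε) - ε ≤ F x ∧ F x ≤ Fs n (x + ε) + ε := by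
      refine (isCompact_Icc : IsCompact (Icc A B)).induction_on
        (p := fun S => ∀ᶠ n in atTop, ∀ x ∈ S,
          Fs n (x - ε) - ε ≤ F x ∧ F x ≤ Fs n (x + ε) + ε) ?_ ?_ ?_ ?_
      · simp
      · intro s t hst ht
        filter_upwards [ht] with n hn x hx using hn x (hst hx)
      · intro s t hs ht
        filter_upwards [hs, ht] with n h1 h2 x hx
        exact hx.elim (h1 x) (h2 x)
      · intro x _
        refine ⟨Ioo (x - ε / 4) (x + ε / 4), mem_nhdsWithin_of_mem_nhds
          (Ioo_mem_nhds (by linarith) (by linarith)), ?_⟩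
        obtain ⟨p, hp1, hp2, hp⟩ := hD (x + ε / 4) (x + 3 * ε / 4) (by linarith)
        obtain ⟨q, hq1, hq2, hq⟩ := hD (x - 3 * ε / 4) (x - ε / 4) (by linarith)
        filter_upwards [near p hp, near q hq] with n h1 h2 y hy
        have e1 := hF (show y ≤ p by linarith [hy.2])
        have e2 := hFs n (show p ≤ y + ε by linarith [hy.1])
        have e3 := hF (show q ≤ y by linarith [hy.1])
        have e4 := hFs n (show y - ε ≤ q by linarith [hy.2])
        constructor <;> linarith [h1.1, h1.2, h2.1, h2.2]
    filter_upwards [hcomp, near A hAD, near B hBD] with n h1 h2 h3 x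
    rcases lt_or_ge x A with hx | hx
    · have e1 := hFs n (show x - ε ≤ A by linarith)
      have e2 := hF hx.le
      constructor
      · linarith [hF0 x, h2.1]
      · linarith [hFs0 n (x + ε)]
    rcases le_or_gt x B with hx' | hx'
    · exact h1 x ⟨hx, hx'⟩
    · have e1 := hFs n (show x - ε ≤ x by linarith)
      have e2 := hFs n (show x ≤ x + ε by linarith)
      have e3 := hFsb n x (by linarith)
      have e4 := hFsb n B hB1.le
      have e5 := hFb x (by linarith)
      have e6 := hFb B hB1.le
      constructor <;> linarith [h3.1, h3.2]
  rw [tendsto_order]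
  constructor
  · intro a ha
    exact Eventually.of_forall fun n => ha.trans_le (aux_levy_nonneg _ _)
  · intro a ha
    filter_upwards [key (a / 2) (by linarith)] with n hn
    exact (aux_levy_le _ _ _ (by linarith) hn).trans_lt (by linarith)

lemma aux_mono (μ : Measure ℝ) (hμ : ∀ s : ℝ, μ (Iic s) < ⊤) : Monotone (distFun μ) := by
  intro x y hxy
  exact ENNReal.toReal_mono (hμ y).ne (measure_mono (Iic_subset_Iic.2 hxy))

lemma aux_bot (μ : Measure ℝ) (hμ : ∀ s : ℝ, μ (Iic s) < ⊤) :
    Tendsto (distFun μ) atBot (𝓝 0) := by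
  have h := tendsto_measure_iInter_atBot (μ := μ) (s := fun x : ℝ => Iic x)
    (fun i => measurableSet_Iic.nullMeasurableSet) (fun x y h => Iic_subset_Iic.2 h)
    ⟨0, (hμ 0).ne⟩
  have e : (⋂ x : ℝ, Iic x) = ∅ := by
    ext y; simp only [mem_iInter, mem_Iic, mem_empty_iff_false, iff_false, not_forall, not_le]
    exact ⟨y - 1, by linarith⟩
  rw [e, measure_empty] at h
  have := (ENNReal.tendsto_toReal ENNReal.zero_ne_top).comp h
  exact this

lemma aux_cont (μ : Measure ℝ) (hμ : ∀ s : ℝ, μ (Iic s) < ⊤) (s : ℝ) (hs : μ {s} = 0)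
    (ε : ℝ) (hε : 0 < ε) :
    ∀ᶠ δ in 𝓝[>] (0 : ℝ), distFun μ (s + δ) < distFun μ s + ε ∧
      distFun μ s - ε < distFun μ (s - δ) := by
  have := aux_finOnCompacts μ hμ
  have h := tendsto_measure_Icc_nhdsWithin_right' μ s
  rw [hs] at h
  filter_upwards [h.eventually (gt_mem_nhds (ENNReal.ofReal_pos.2 hε)), self_mem_nhdsWithin]
    with δ hδ hδ0
  have hδ0 : 0 < δ := hδ0
  have h1 : μ (Iic (s + δ)) ≤ μ (Iic (s - δ)) + μ (Icc (s - δ) (s + δ)) := by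
    refine (measure_mono ?_).trans (measure_union_le _ _)
    intro x hx
    rcases le_total x (s - δ) with h | h
    · exact Or.inl h
    · exact Or.inr ⟨h, hx⟩
  have h2 : distFun μ (s + δ) < distFun μ (s - δ) + ε := by
    have e1 := ENNReal.toReal_mono (by simp [(hμ (s - δ)).ne, hδ.ne_top]) h1
    rw [ENNReal.toReal_add (hμ _).ne hδ.ne_top] at e1
    have e2 := (ENNReal.lt_ofReal_iff_toReal_lt hδ.ne_top).1 hδ
    unfold distFun
    linarith
  have h3 := aux_mono μ hμ (show s - δ ≤ s by linarith)
  have h4 := aux_mono μ hμ (show s ≤ s + δ by linarith)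
  constructor <;> linarith

lemma aux_sum (L : ℕ → ℕ → ℝ) (hL : ∀ n k, 0 ≤ L n k) :
    (∀ k, Tendsto (fun n => L n k) atTop (𝓝 0)) ↔
    Tendsto (fun n => ∑' k : ℕ, ((2 : ℝ)⁻¹ ^ (k + 1)) * (L n k / (1 + L n k))) atTop (𝓝 0) := by
  have hsum : Summable (fun k : ℕ => (2 : ℝ)⁻¹ ^ (k + 1)) :=
    (summable_nat_add_iff 1).2 (summable_geometric_of_lt_one (by norm_num) (by norm_num))
  have h0 : ∀ n k, 0 ≤ L n k / (1 + L n k) := fun n k =>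
    div_nonneg (hL n k) (by linarith [hL n k])
  have h1 : ∀ n k, L n k / (1 + L n k) < 1 := fun n k => by
    rw [div_lt_one (by linarith [hL n k])]; linarith
  have hb0 : ∀ n k, 0 ≤ ((2 : ℝ)⁻¹ ^ (k + 1)) * (L n k / (1 + L n k)) := fun n k =>
    mul_nonneg (by positivity) (h0 n k)
  have hb1 : ∀ n k, ((2 : ℝ)⁻¹ ^ (k + 1)) * (L n k / (1 + L n k)) ≤ (2 : ℝ)⁻¹ ^ (k + 1) :=
    fun n k => mul_le_of_le_one_right (by positivity) (h1 n k).le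
  constructor
  · intro h
    have := tendsto_tsum_of_dominated_convergence (𝓕 := atTop)
      (f := fun n k => ((2 : ℝ)⁻¹ ^ (k + 1)) * (L n k / (1 + L n k))) (g := fun _ => 0)
      hsum ?_ ?_
    · simpa using this
    · intro k
      have := ((h k).div ((h k).const_add 1) (by norm_num)).const_mul ((2 : ℝ)⁻¹ ^ (k + 1))
      simpa using this
    · refine Eventually.of_forall fun n k => ?_
      rw [Real.norm_of_nonneg (hb0 n k)]
      exact hb1 n k
  · intro h k
    have hS : ∀ n, Summable (fun k : ℕ => ((2 : ℝ)⁻¹ ^ (k + 1)) * (L n k / (1 + L n k))) :=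
      fun n => Summable.of_nonneg_of_le (hb0 n) (hb1 n) hsum
    have h2 : Tendsto (fun n => ((2 : ℝ)⁻¹ ^ (k + 1)) * (L n k / (1 + L n k))) atTop (𝓝 0) :=
      squeeze_zero (fun n => hb0 n k)
        (fun n => (hS n).le_tsum k (fun j _ => hb0 n j)) h
    have h3 : Tendsto (fun n => L n k / (1 + L n k)) atTop (𝓝 0) := by
      have := h2.const_mul (((2 : ℝ)⁻¹ ^ (k + 1))⁻¹)
      simp only [mul_zero] at this
      refine this.congr fun n => ?_
      rw [inv_mul_cancel_left₀ (by positivity)]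
    have h4 := h3.div (h3.const_sub 1) (by norm_num)
    simp only [sub_zero, zero_div] at h4
    refine h4.congr fun n => ?_
    have := hL n k
    have : 1 + L n k ≠ 0 := by linarith
    simp only [Pi.div_apply]
    field_simp
    ring

/-- `d` metrizes vague convergence in `M`. -/
theorem metD_metrizes_vague (t : ℕ → ℝ) (ht : StrictMono t) (htop : Tendsto t atTop atTop)
    (μ : Measure ℝ) (μs : ℕ → Measure ℝ)
    (hμ : ∀ s : ℝ, μ (Iic s) < ⊤) (hμs : ∀ n : ℕ, ∀ s : ℝ, μs n (Iic s) < ⊤) :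
    (∀ s : ℝ, μ {s} = 0 →
        Tendsto (fun n : ℕ => distFun (μs n) s) atTop (nhds (distFun μ s))) ↔
      Tendsto (fun n : ℕ => metD t (μs n) μ) atTop (nhds 0) := by
  unfold metD
  rw [← aux_sum (fun n k => levyDist (distFun (truncMeas t (k + 1) (μs n)))
    (distFun (truncMeas t (k + 1) μ))) (fun n k => aux_levy_nonneg _ _)]
  unfold truncMeas
  simp only [Nat.add_sub_cancel]
  have hfin : ∀ ν : Measure ℝ, (∀ s : ℝ, ν (Iic s) < ⊤) → ∀ k : ℕ, ∀ s : ℝ,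
      (ν.withDensity (fun x => ENNReal.ofReal (fTrunc (t k) (t (k + 1)) x))) (Iic s) < ⊤ :=
    fun ν hν k s =>
      (aux_le ν hν _ _ (ht (Nat.lt_succ_self k)) s s (Or.inl le_rfl)).trans_lt (hν s)
  constructor
  · intro h k
    have hk : t k < t (k + 1) := ht (Nat.lt_succ_self k)
    refine aux_levy_tendsto _ _ (fun n => aux_mono _ (hfin _ (hμs n) k))
      (aux_mono _ (hfin _ hμ k)) (fun n x => ENNReal.toReal_nonneg)
      (fun x => ENNReal.toReal_nonneg) {s | μ {s} = 0} (aux_exists μ hμ)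
      (fun p hp => aux_conv μ μs hμ hμs h _ _ hk p hp) (t (k + 1)) ?_ ?_ ?_
    · intro n x hx
      exact congrArg ENNReal.toReal (aux_const _ (hμs n) _ _ hk x hx)
    · intro x hx
      exact congrArg ENNReal.toReal (aux_const _ hμ _ _ hk x hx)
    · exact aux_bot _ (hfin _ hμ k)
  · intro h s hs
    obtain ⟨k, hks⟩ := (htop.eventually (eventually_gt_atTop s)).exists
    have hk : t k < t (k + 1) := ht (Nat.lt_succ_self k)
    have E : ∀ ν : Measure ℝ, (∀ s : ℝ, ν (Iic s) < ⊤) → ∀ x ≤ t k,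
        distFun (ν.withDensity (fun x => ENNReal.ofReal (fTrunc (t k) (t (k + 1)) x))) x
          = distFun ν x := fun ν hν x hx =>
      congrArg ENNReal.toReal (aux_eq _ hν _ _ hk x hx)
    have Bd : ∀ ν : Measure ℝ, (∀ s : ℝ, ν (Iic s) < ⊤) → ∀ x,
        distFun (ν.withDensity (fun x => ENNReal.ofReal (fTrunc (t k) (t (k + 1)) x))) x
          ≤ distFun ν (t (k + 1)) := fun ν hν x =>
      ENNReal.toReal_mono (hν _).ne (aux_le ν hν _ _ hk x _ (Or.inr le_rfl))
    rw [Metric.tendsto_atTop']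
    refine fun ε hε => ?_
    have hsm : ∀ᶠ δ in 𝓝[>] (0 : ℝ), δ < min (ε / 2) (t k - s) :=
      mem_nhdsWithin_of_mem_nhds (gt_mem_nhds (lt_min (by linarith) (by linarith)))
    obtain ⟨δ, ⟨hc1, hc2⟩, hδ1, hδ0⟩ := ((aux_cont μ hμ s hs (ε / 2) (by linarith)).and
      (hsm.and self_mem_nhdsWithin)).exists
    have hδ0 : 0 < δ := hδ0
    have hd1 : δ < ε / 2 := hδ1.trans_le (min_le_left _ _)
    have hd2 : δ < t k - s := hδ1.trans_le (min_le_right _ _)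
    obtain ⟨N, hN⟩ := eventually_atTop.1 ((h k).eventually (gt_mem_nhds hδ0))
    refine ⟨N, fun n hn => ?_⟩
    have L := aux_levy_lt _ (distFun (μ.withDensity
      (fun x => ENNReal.ofReal (fTrunc (t k) (t (k + 1)) x)))) (aux_mono _ (hfin _ (hμs n) k)) δ (fun x => ENNReal.toReal_nonneg)
      (fun x => ENNReal.toReal_nonneg) (max (distFun (μs n) (t (k + 1))) (distFun μ (t (k + 1))))
      (fun x => (Bd _ (hμs n) x).trans (le_max_left _ _))
      (fun x => (Bd _ hμ x).trans (le_max_right _ _)) (hN n hn.le)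
    have L1 := (L (s + δ)).1
    have L2 := (L (s - δ)).2
    rw [add_sub_cancel_right, E _ (hμs n) s hks.le, E _ hμ (s + δ) (by linarith)] at L1
    rw [sub_add_cancel, E _ (hμs n) s hks.le, E _ hμ (s - δ) (by linarith)] at L2
    rw [Real.dist_eq, abs_lt]
    constructor <;> linarith
end

section
/- For every c > 0, a > 0 and x ∈ (0,1), n a L_n(x) → M(x) as the integer n → ∞. -/
open MeasureTheory Filter Set

/-- `L_n(x) = [Γ(c)/(Γ(c/n)Γ(c-c/n))] ∫_x^1 s^{c/n-1} (1-s)^{c(1-1/n)-1} ds`. -/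
noncomputable def Lfun (c : ℝ) (n : ℕ) (x : ℝ) : ℝ :=
  Real.Gamma c / (Real.Gamma (c / n) * Real.Gamma (c - c / n)) *
    ∫ s in Ioo x 1, s ^ (c / n - 1) * (1 - s) ^ (c * (1 - 1 / (n : ℝ)) - 1)

/-- `M(x) = a c ∫_x^1 s^{-1} (1-s)^{c-1} ds`. -/
noncomputable def Mfun (c a : ℝ) (x : ℝ) : ℝ :=
  a * c * ∫ s in Ioo x 1, s ^ (-1 : ℝ) * (1 - s) ^ (c - 1)

/-- for every `c > 0`, `a > 0` and `x ∈ (0,1)`, `n a L_n(x) → M(x)` as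
`n → ∞`. -/
theorem tendsto_n_a_Lfun (c a : ℝ) (hc : 0 < c) (ha : 0 < a) (x : ℝ)
    (hx : x ∈ Ioo (0 : ℝ) 1) :
    Tendsto (fun n : ℕ => (n : ℝ) * a * Lfun c n x) atTop (nhds (Mfun c a x)) := by
  obtain ⟨hx0, hx1⟩ := hx
  have hcn : Tendsto (fun n : ℕ => c / (n : ℝ)) atTop (nhds 0) :=
    tendsto_const_div_atTop_nhds_zero_nat c
  have h1n : Tendsto (fun n : ℕ => 1 / (n : ℝ)) atTop (nhds 0) :=
    tendsto_const_div_atTop_nhds_zero_nat 1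
  have hG1 : Tendsto (fun n : ℕ => Real.Gamma (c / n + 1)) atTop (nhds 1) := by
    have hd : ContinuousAt Real.Gamma 1 :=
      (Real.differentiableAt_Gamma (fun m => by
        have : (0:ℝ) ≤ m := Nat.cast_nonneg m
        intro h; linarith)).continuousAt
    have h2 : Tendsto (fun n : ℕ => c / (n : ℝ) + 1) atTop (nhds 1) := by
      simpa using hcn.add_const 1
    simpa [Function.comp_def] using hd.tendsto.comp h2
  have hG2 : Tendsto (fun n : ℕ => Real.Gamma (c - c / n)) atTop (nhds (Real.Gamma c)) := by
    have hd : ContinuousAt Real.Gamma c :=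
      (Real.differentiableAt_Gamma (fun m => by
        have : (0:ℝ) ≤ m := Nat.cast_nonneg m
        intro h; linarith)).continuousAt
    have h2 : Tendsto (fun n : ℕ => c - c / (n : ℝ)) atTop (nhds c) := by
      simpa using hcn.const_sub c
    exact hd.tendsto.comp h2
  have hGc : Real.Gamma c ≠ 0 := (Real.Gamma_pos_of_pos hc).ne'
  have hI : Tendsto (fun n : ℕ => ∫ s in Ioo x 1,
      s ^ (c / n - 1) * (1 - s) ^ (c * (1 - 1 / (n : ℝ)) - 1)) atTop
      (nhds (∫ s in Ioo x 1, s ^ (-1 : ℝ) * (1 - s) ^ (c - 1))) := by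
    apply tendsto_integral_filter_of_dominated_convergence
      (fun s => x ^ (-1 : ℝ) * (1 - s) ^ (c / 2 - 1))
    · refine Eventually.of_forall fun n => ?_
      exact Measurable.aestronglyMeasurable (by fun_prop)
    · filter_upwards [eventually_ge_atTop 2] with n hn
      refine (ae_restrict_iff' measurableSet_Ioo).2 (Eventually.of_forall fun s hs => ?_)
      have hs0 : 0 < s := hx0.trans hs.1
      have hs1 : 0 < 1 - s := by linarith [hs.2]
      have hn2 : (2:ℝ) ≤ n := by exact_mod_cast hn
      have hn0 : (0:ℝ) < n := by linarith
      have hcn0 : 0 ≤ c / (n:ℝ) := by positivity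
      have hhalf : 1 / (n:ℝ) ≤ 1 / 2 := one_div_le_one_div_of_le (by norm_num) hn2
      rw [Real.norm_of_nonneg (by positivity)]
      have e1 : s ^ (c / (n:ℝ) - 1) ≤ x ^ (-1 : ℝ) :=
        (Real.rpow_le_rpow_of_exponent_ge hs0 hs.2.le (by linarith)).trans
          (Real.rpow_le_rpow_of_nonpos hx0 hs.1.le (by norm_num))
      have e2 : (1 - s) ^ (c * (1 - 1 / (n : ℝ)) - 1) ≤ (1 - s) ^ (c / 2 - 1) :=
        Real.rpow_le_rpow_of_exponent_ge hs1 (by linarith) (by nlinarith)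
      exact mul_le_mul e1 e2 (by positivity) (by positivity)
    · apply Integrable.const_mul
      have h := (intervalIntegral.intervalIntegrable_rpow' (a := 0) (b := 1 - x)
        (r := c / 2 - 1) (by linarith)).comp_sub_left 1
      simp only [sub_zero, sub_sub_cancel] at h
      have h' := (intervalIntegrable_iff_integrableOn_Ioo_of_le hx1.le).1 h.symm
      exact h'
    · refine (ae_restrict_iff' measurableSet_Ioo).2 (Eventually.of_forall fun s hs => ?_)
      have hs0 : 0 < s := hx0.trans hs.1
      have hs1 : 0 < 1 - s := by linarith [hs.2]
      refine Tendsto.mul ?_ ?_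
      · refine Tendsto.rpow tendsto_const_nhds ?_ (Or.inl hs0.ne')
        simpa using hcn.sub_const 1
      · refine Tendsto.rpow tendsto_const_nhds ?_ (Or.inl hs1.ne')
        simpa using ((h1n.const_sub 1).const_mul c).sub_const 1
  have hlim : Tendsto (fun n : ℕ => a * c * (Real.Gamma c / (Real.Gamma (c / n + 1) *
      Real.Gamma (c - c / n))) * ∫ s in Ioo x 1,
      s ^ (c / n - 1) * (1 - s) ^ (c * (1 - 1 / (n : ℝ)) - 1)) atTop
      (nhds (Mfun c a x)) := by
    have := (((tendsto_const_nhds (x := Real.Gamma c)).div (hG1.mul hG2)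
      (by simpa using hGc)).const_mul (a * c)).mul hI
    rw [one_mul, div_self hGc, mul_one] at this
    exact this
  refine hlim.congr' ?_
  filter_upwards [eventually_gt_atTop 0] with n hn
  have hn' : (0:ℝ) < n := by exact_mod_cast hn
  have hg : Real.Gamma (c / n) ≠ 0 := (Real.Gamma_pos_of_pos (by positivity)).ne'
  rw [Lfun, Real.Gamma_add_one (by positivity)]
  rw [← mul_assoc]
  congr 1
  rw [mul_assoc (c / (n:ℝ)), div_mul_eq_div_div _ (Real.Gamma (c/n))]
  field_simp
end

section
/- Fix c > 0, a > 0 and γ > 0. For each integer n ≥ 2, L_n is a continuous strictly decreasing bijection from (0,1) onto (0,1); hence for every n ≥ 2 with γ/(a n) < 1 there is a unique x_n ∈ (0,1) with L_n(x_n) = γ/(a n). Then x_n → M^{−1}(γ) as n → ∞, where M^{−1} : (0,∞) → (0,1) is the inverse of the continuous strictly decreasing bijection M : (0,1) → (0,∞). -/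
open MeasureTheory Filter Set

lemma aux_beta {α β : ℝ} (hα : 0 < α) (hβ : 0 < β) :
    IntervalIntegrable (fun s : ℝ => s ^ (α - 1) * (1 - s) ^ (β - 1)) volume 0 1 ∧
    ∫ s in (0 : ℝ)..1, s ^ (α - 1) * (1 - s) ^ (β - 1) =
      Real.Gamma α * Real.Gamma β / Real.Gamma (α + β) := by
  have hcv := Complex.betaIntegral_convergent (u := α) (v := β) (by simpa) (by simpa)
  rw [intervalIntegrable_iff_integrableOn_Ioc_of_le zero_le_one] at hcv
  have hE : ∀ x ∈ Ioc (0 : ℝ) 1,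
      RCLike.re ((x : ℂ) ^ ((α : ℂ) - 1) * (1 - (x : ℂ)) ^ ((β : ℂ) - 1)) =
      x ^ (α - 1) * (1 - x) ^ (β - 1) := by
    intro x ⟨hx1, hx2⟩
    norm_cast
    rw [← Complex.ofReal_cpow, ← Complex.ofReal_cpow, RCLike.re_to_complex,
        Complex.re_mul_ofReal, Complex.ofReal_re]
    all_goals linarith
  constructor
  · rw [intervalIntegrable_iff_integrableOn_Ioc_of_le zero_le_one]
    exact (integrableOn_congr_fun hE measurableSet_Ioc).1 hcv.re
  · have := ProbabilityTheory.beta_eq_betaIntegralReal α β hα hβ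
    rw [ProbabilityTheory.beta] at this
    rw [this, Complex.betaIntegral, intervalIntegral.integral_of_le zero_le_one,
      intervalIntegral.integral_of_le zero_le_one, ← RCLike.re_to_complex, ← integral_re hcv]
    exact (setIntegral_congr_fun measurableSet_Ioc hE).symm

lemma aux_Ioo (f : ℝ → ℝ) {x : ℝ} (hx : x ≤ 1) :
    ∫ s in Ioo x 1, f s = ∫ s in x..1, f s := by
  rw [intervalIntegral.integral_of_le hx, integral_Ioc_eq_integral_Ioo]

lemma aux_anti {f : ℝ → ℝ} {l : ℝ}
    (hf : IntervalIntegrable f volume l 1) (hpos : ∀ s ∈ Ioo l 1, 0 < f s) :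
    StrictAntiOn (fun x => ∫ s in x..1, f s) (Icc l 1) := by
  intro x hx y hy hxy
  have hl : l ≤ 1 := hx.1.trans hx.2
  have h1 : IntervalIntegrable f volume x y := hf.mono_set (by
    rw [uIcc_of_le hxy.le, uIcc_of_le hl]; exact Icc_subset_Icc hx.1 hy.2)
  have h2 : IntervalIntegrable f volume y 1 := hf.mono_set (by
    rw [uIcc_of_le hy.2, uIcc_of_le hl]; exact Icc_subset_Icc hy.1 le_rfl)
  have h3 := intervalIntegral.integral_add_adjacent_intervals h1 h2
  have h4 := intervalIntegral.intervalIntegral_pos_of_pos_on h1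
    (fun s hs => hpos s ⟨hx.1.trans_lt hs.1, hs.2.trans_le hy.2⟩) hxy
  show ∫ s in y..1, f s < ∫ s in x..1, f s
  linarith

lemma aux_cont_s11 {f : ℝ → ℝ} (hf : IntervalIntegrable f volume 0 1) :
    ContinuousOn (fun x => ∫ s in x..1, f s) (Icc 0 1) := by
  have := intervalIntegral.continuousOn_primitive_interval_left (f := f) (μ := volume)
    (a := 0) (b := 1) (by
      rw [uIcc_of_le zero_le_one, integrableOn_Icc_iff_integrableOn_Ioc]
      exact (intervalIntegrable_iff_integrableOn_Ioc_of_le zero_le_one).1 hf)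
  rwa [uIcc_of_le zero_le_one] at this

lemma aux_params {c : ℝ} (hc : 0 < c) {n : ℕ} (hn : 2 ≤ n) :
    0 < c / n ∧ c / n ≤ c / 2 ∧ c / n < c ∧ c * (1 - 1 / (n : ℝ)) = c - c / n := by
  have : (2 : ℝ) ≤ n := by exact_mod_cast hn
  have h2 : c / n ≤ c / 2 := by gcongr
  refine ⟨by positivity, h2, by linarith, by ring⟩

lemma aux_first {c : ℝ} (hc : 0 < c) {n : ℕ} (hn : 2 ≤ n) :
    ContinuousOn (Lfun c n) (Ioo 0 1) ∧
        StrictAntiOn (Lfun c n) (Ioo 0 1) ∧ Set.BijOn (Lfun c n) (Ioo 0 1) (Ioo 0 1) := by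
  obtain ⟨p1, p2, p3, p4⟩ := aux_params hc hn
  obtain ⟨b1, b2⟩ := aux_beta p1 (sub_pos.2 p3)
  rw [add_sub_cancel] at b2
  have g1 := Real.Gamma_pos_of_pos p1
  have g2 := Real.Gamma_pos_of_pos (sub_pos.2 p3)
  have g3 := Real.Gamma_pos_of_pos hc
  set f : ℝ → ℝ := fun s : ℝ => s ^ (c / n - 1) * (1 - s) ^ (c - c / n - 1) with hf
  set K := Real.Gamma c / (Real.Gamma (c / n) * Real.Gamma (c - c / n)) with hK
  have hKpos : 0 < K := by positivity
  have hL : ∀ x ∈ Icc (0:ℝ) 1, Lfun c n x = K * ∫ s in x..1, f s := by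
    intro x hx
    rw [Lfun, p4, aux_Ioo _ hx.2]
  have hfp : ∀ s ∈ Ioo (0:ℝ) 1, 0 < f s := fun s hs =>
    mul_pos (Real.rpow_pos_of_pos hs.1 _) (Real.rpow_pos_of_pos (by linarith [hs.2]) _)
  have hC : ContinuousOn (Lfun c n) (Icc 0 1) :=
    (continuousOn_const.mul (aux_cont_s11 b1)).congr hL
  have hA : StrictAntiOn (Lfun c n) (Icc 0 1) := by
    intro x hx y hy hxy
    rw [hL x hx, hL y hy]
    exact mul_lt_mul_of_pos_left (aux_anti b1 hfp hx hy hxy) hKpos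
  have h0 : Lfun c n 0 = 1 := by
    have hh : ∀ u v w : ℝ, 0 < u → 0 < v → 0 < w → u / (v * w) * (v * w / u) = 1 := by
      intro u v w hu hv hw; field_simp
    rw [hL 0 (by simp), b2, hK]; exact hh _ _ _ g3 g1 g2
  have h1 : Lfun c n 1 = 0 := by
    rw [hL 1 (by simp)]; simp
  have hA' := hA.mono Ioo_subset_Icc_self
  refine ⟨hC.mono Ioo_subset_Icc_self, hA', ?_, hA'.injOn, ?_⟩
  · intro x hx
    have hx' := Ioo_subset_Icc_self hx
    constructor
    · rw [← h1]; exact hA hx' (by simp) hx.2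
    · rw [← h0]; exact hA (by simp) hx' hx.1
  · have := intermediate_value_Ioo' zero_le_one hC
    rwa [h0, h1] at this

lemma aux_int {z r : ℝ} (hr : 0 < r) (K : ℝ) :
    IntervalIntegrable (fun s : ℝ => K * (1 - s) ^ (r - 1)) volume z 1 := by
  have h : IntervalIntegrable (fun s : ℝ => s ^ (r - 1)) volume (1 - z) (1 - 1) :=
    intervalIntegral.intervalIntegrable_rpow' (by linarith)
  have := h.comp_sub_left 1
  simp only [sub_sub_cancel] at this
  exact this.const_mul K

lemma aux_bound {z s α β p : ℝ} (hz : 0 < z) (hs : s ∈ Ioo z 1) (hα : 0 ≤ α) (hβ : p ≤ β) :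
    ‖s ^ (α - 1) * (1 - s) ^ (β - 1)‖ ≤ z⁻¹ * (1 - s) ^ (p - 1) := by
  have hs0 : 0 < s := hz.trans hs.1
  have hs1 : 0 < 1 - s := sub_pos.2 hs.2
  rw [Real.norm_of_nonneg (by positivity)]
  have e1 : s ^ (α - 1) ≤ z⁻¹ := by
    calc s ^ (α - 1) ≤ s ^ (-1 : ℝ) :=
          Real.rpow_le_rpow_of_exponent_ge hs0 hs.2.le (by linarith)
      _ = s⁻¹ := Real.rpow_neg_one s
      _ ≤ z⁻¹ := by gcongr; exact hs.1.le
  have e2 : (1 - s) ^ (β - 1) ≤ (1 - s) ^ (p - 1) :=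
    Real.rpow_le_rpow_of_exponent_ge hs1 (by linarith) (by linarith)
  gcongr

lemma aux_Mint {c z : ℝ} (hc : 0 < c) (hz : z ∈ Ioo (0:ℝ) 1) :
    IntervalIntegrable (fun s : ℝ => s ^ (-1 : ℝ) * (1 - s) ^ (c - 1)) volume z 1 := by
  have h := aux_int (z := z) hc z⁻¹
  rw [intervalIntegrable_iff_integrableOn_Ioo_of_le hz.2.le] at h ⊢
  refine Integrable.mono' h (Measurable.aestronglyMeasurable (by fun_prop)) ?_
  refine ae_restrict_of_forall_mem measurableSet_Ioo (fun s hs => ?_)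
  have := aux_bound (α := 0) (β := c) (p := c) hz.1 hs le_rfl le_rfl
  simpa using this

lemma aux_lim {c z : ℝ} (hc : 0 < c) (hz : z ∈ Ioo (0:ℝ) 1) :
    Tendsto (fun n : ℕ => (n : ℝ) * Lfun c n z) atTop
      (nhds (c * ∫ s in Ioo z 1, s ^ (-1 : ℝ) * (1 - s) ^ (c - 1))) := by
  have hcn : Tendsto (fun n : ℕ => c / (n : ℝ)) atTop (nhds 0) :=
    tendsto_const_div_atTop_nhds_zero_nat c
  have hI : Tendsto (fun n : ℕ => ∫ s in Ioo z 1,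
      s ^ (c / n - 1) * (1 - s) ^ (c * (1 - 1 / (n : ℝ)) - 1)) atTop
      (nhds (∫ s in Ioo z 1, s ^ (-1 : ℝ) * (1 - s) ^ (c - 1))) := by
    refine tendsto_integral_filter_of_dominated_convergence
      (fun s => z⁻¹ * (1 - s) ^ (c / 2 - 1)) ?_ ?_ ?_ ?_
    · exact Eventually.of_forall fun n => Measurable.aestronglyMeasurable (by fun_prop)
    · filter_upwards [eventually_ge_atTop 2] with n hn
      obtain ⟨p1, p2, p3, p4⟩ := aux_params hc hn
      refine ae_restrict_of_forall_mem measurableSet_Ioo (fun s hs => ?_)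
      rw [p4]
      exact aux_bound hz.1 hs p1.le (by linarith)
    · exact (intervalIntegrable_iff_integrableOn_Ioo_of_le hz.2.le).1
        (aux_int (half_pos hc) z⁻¹)
    · refine ae_restrict_of_forall_mem measurableSet_Ioo (fun s hs => ?_)
      have hs0 : 0 < s := hz.1.trans hs.1
      have hs1 : 0 < 1 - s := sub_pos.2 hs.2
      refine Tendsto.mul ?_ ?_
      · refine Tendsto.rpow tendsto_const_nhds ?_ (Or.inl hs0.ne')
        simpa using hcn.sub_const 1
      · refine Tendsto.rpow tendsto_const_nhds ?_ (Or.inl hs1.ne')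
        have : Tendsto (fun n : ℕ => c - c / (n : ℝ) - 1) atTop (nhds (c - 0 - 1)) :=
          (hcn.const_sub c).sub_const 1
        rw [sub_zero] at this
        refine this.congr fun n => by ring
  have hG : ∀ t : ℝ, 0 < t → ContinuousAt Real.Gamma t := fun t ht =>
    (Real.differentiableOn_Gamma_Ioi.differentiableAt (Ioi_mem_nhds ht)).continuousAt
  have hG1 : Tendsto (fun n : ℕ => Real.Gamma (c / n + 1)) atTop (nhds 1) := by
    have h := (hG 1 one_pos).tendsto
    rw [Real.Gamma_one] at h
    exact h.comp (by simpa using hcn.add_const 1)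
  have hG2 : Tendsto (fun n : ℕ => Real.Gamma (c - c / n)) atTop (nhds (Real.Gamma c)) :=
    (hG c hc).tendsto.comp (by simpa using hcn.const_sub c)
  have g := (Real.Gamma_pos_of_pos hc).ne'
  have hK : Tendsto (fun n : ℕ => c * Real.Gamma c /
      (Real.Gamma (c / n + 1) * Real.Gamma (c - c / n))) atTop (nhds c) := by
    have := (tendsto_const_nhds (x := c * Real.Gamma c)).div (hG1.mul hG2) (by simpa using g)
    rwa [one_mul, mul_div_cancel_right₀ _ g] at this
  refine (hK.mul hI).congr' ?_
  filter_upwards [eventually_ge_atTop 2] with n hn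
  obtain ⟨p1, p2, p3, p4⟩ := aux_params hc hn
  have hn0 : (n : ℝ) ≠ 0 := by
    have : n ≠ 0 := by omega
    exact_mod_cast this
  have g1 := (Real.Gamma_pos_of_pos p1).ne'
  have g2 := (Real.Gamma_pos_of_pos (sub_pos.2 p3)).ne'
  rw [Lfun, ← mul_assoc, Real.Gamma_add_one p1.ne']
  congr 1
  field_simp

lemma aux_Manti {c a : ℝ} (hc : 0 < c) (ha : 0 < a) : StrictAntiOn (Mfun c a) (Ioo 0 1) := by
  intro x hx y hy hxy
  rw [Mfun, Mfun, aux_Ioo _ hx.2.le, aux_Ioo _ hy.2.le]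
  refine mul_lt_mul_of_pos_left ?_ (by positivity)
  refine aux_anti (aux_Mint hc hx) (fun s hs => ?_) ⟨le_rfl, hx.2.le⟩ ⟨hxy.le, hy.2.le⟩ hxy
  exact mul_pos (Real.rpow_pos_of_pos (hx.1.trans hs.1) _)
    (Real.rpow_pos_of_pos (by linarith [hs.2]) _)

/-- each `L_n` (n ≥ 2) is a continuous strictly decreasing bijection from
`(0,1)` onto `(0,1)`; for `γ/(a n) < 1` there is a unique `x_n ∈ (0,1)` with
`L_n(x_n) = γ/(a n)`; and `x_n → M⁻¹(γ)`, i.e. `x_n` converges to the unique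
`y ∈ (0,1)` with `M(y) = γ`. -/
theorem Lfun_inverse_tendsto (c a γ : ℝ) (hc : 0 < c) (ha : 0 < a) (hγ : 0 < γ) :
    (∀ n : ℕ, 2 ≤ n → ContinuousOn (Lfun c n) (Ioo 0 1) ∧
        StrictAntiOn (Lfun c n) (Ioo 0 1) ∧ Set.BijOn (Lfun c n) (Ioo 0 1) (Ioo 0 1)) ∧
      (∀ n : ℕ, 2 ≤ n → γ / (a * n) < 1 →
        ∃! x : ℝ, x ∈ Ioo (0 : ℝ) 1 ∧ Lfun c n x = γ / (a * n)) ∧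
      (∀ x : ℕ → ℝ,
        (∀ n : ℕ, 2 ≤ n → γ / (a * n) < 1 →
          x n ∈ Ioo (0 : ℝ) 1 ∧ Lfun c n (x n) = γ / (a * n)) →
        ∀ y : ℝ, y ∈ Ioo (0 : ℝ) 1 → Mfun c a y = γ →
          Tendsto x atTop (nhds y)) := by
  refine ⟨fun n hn => aux_first hc hn, ?_, ?_⟩
  · intro n hn h
    obtain ⟨-, -, hb⟩ := aux_first hc hn
    have hn0 : (0 : ℝ) < n := by
      have : 0 < n := by omega
      exact_mod_cast this
    obtain ⟨x, hx, hxe⟩ := hb.surjOn ⟨by positivity, h⟩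
    exact ⟨x, ⟨hx, hxe⟩, fun y hy => hb.injOn hy.1 hx (hy.2.trans hxe.symm)⟩
  · intro x hx y hy hM
    have hlt : ∀ᶠ n : ℕ in atTop, γ / (a * n) < 1 := by
      have h := tendsto_const_div_atTop_nhds_zero_nat (γ / a)
      filter_upwards [h.eventually_lt_const one_pos] with n hn
      rwa [div_div] at hn
    have hMl : ∀ z ∈ Ioo (0 : ℝ) 1,
        Tendsto (fun n : ℕ => a * ((n : ℝ) * Lfun c n z)) atTop (nhds (Mfun c a z)) := by
      intro z hz
      rw [Mfun, mul_assoc]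
      exact (aux_lim hc hz).const_mul a
    have key : ∀ n : ℕ, 2 ≤ n → a * (n * (γ / (a * n))) = γ := by
      intro n hn
      have hn0 : (n : ℝ) ≠ 0 := by
        have : n ≠ 0 := by omega
        exact_mod_cast this
      field_simp
    rw [tendsto_order]
    constructor
    · intro b hb
      obtain ⟨z, hz1, hz2⟩ := exists_between (max_lt hb hy.1)
      have hz : z ∈ Ioo (0 : ℝ) 1 := ⟨(le_max_right _ _).trans_lt hz1, hz2.trans hy.2⟩
      have hlz : γ < Mfun c a z := hM ▸ aux_Manti hc ha hz hy hz2
      filter_upwards [eventually_ge_atTop 2, hlt, (hMl z hz).eventually_const_lt hlz]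
        with n hn h1 h2
      obtain ⟨hxn, hxe⟩ := hx n hn h1
      refine ((le_max_left _ _).trans_lt hz1).trans ?_
      by_contra hcon
      have h3 := (aux_first hc hn).2.1.antitoneOn hxn hz (not_lt.1 hcon)
      have h4 : a * (n * Lfun c n z) ≤ a * (n * Lfun c n (x n)) := by gcongr
      rw [hxe, key n hn] at h4
      linarith
    · intro b hb
      obtain ⟨z, hz1, hz2⟩ := exists_between (lt_min hb hy.2)
      have hz : z ∈ Ioo (0 : ℝ) 1 := ⟨hy.1.trans hz1, hz2.trans_le (min_le_right _ _)⟩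
      have hlz : Mfun c a z < γ := hM ▸ aux_Manti hc ha hy hz hz1
      filter_upwards [eventually_ge_atTop 2, hlt, (hMl z hz).eventually_lt_const hlz]
        with n hn h1 h2
      obtain ⟨hxn, hxe⟩ := hx n hn h1
      refine lt_trans ?_ (hz2.trans_le (min_le_left _ _))
      by_contra hcon
      have h3 := (aux_first hc hn).2.1.antitoneOn hz hxn (not_lt.1 hcon)
      have h4 : a * (n * Lfun c n (x n)) ≤ a * (n * Lfun c n z) := by gcongr
      rw [hxe, key n hn] at h4
      linarith
end

section
/- Let t₀ > 0, let η be a nonatomic finite Borel measure on [0, t₀] with total mass a = η([0, t₀]) > 0, and let c : [0, t₀] → (0, ∞) be continuous. On a probability space, let (θᵢ)_{i≥1} be i.i.d. random variables with law Π = η/a, and let (Eᵢ)_{i≥1} be i.i.d. exponential random variables with mean 1, independent of (θᵢ)_{i≥1}; set Γᵢ = E₁ + ⋯ + Eᵢ. Define A_n(t) = Σ_{i=1}^n L_{n,θᵢ}^{−1}(Γᵢ/(a n)) · 1{θᵢ ≤ t} for t ∈ [0, t₀] (with the convention L_{n,z}^{−1}(p) = 0 when p ≥ 1), and A(t) = Σ_{i=1}^∞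 M_{θᵢ}^{−1}(Γᵢ) · 1{θᵢ ≤ t}. Then almost surely: the series defining A(t) converges for every t ∈ [0, t₀], and A_n converges vaguely to A as n → ∞, i.e., A_n(t) → A(t) for every t ∈ [0, t₀] at which the nondecreasing function A is continuous. -/
open MeasureTheory Filter Set

lemma bp_betaInt {β : ℝ} (hβ : 0 < β) :
    IntegrableOn (fun s : ℝ => s ^ (-(1/2) : ℝ) * (1 - s) ^ (β - 1)) (Ioo 0 1) := by
  have h := Complex.betaIntegral_convergent (u := ((1/2 : ℝ) : ℂ)) (v := (β : ℂ))
    (by norm_num) (by simpa using hβ)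
  rw [intervalIntegrable_iff_integrableOn_Ioo_of_le zero_le_one] at h
  refine IntegrableOn.congr_fun h.norm ?_ measurableSet_Ioo
  intro s hs
  have h1 : (0:ℝ) < 1 - s := by linarith [hs.2]
  have e1 : (1 - (s:ℂ)) = ((1 - s : ℝ) : ℂ) := by push_cast; rfl
  simp only [norm_mul]
  rw [e1, Complex.norm_cpow_eq_rpow_re_of_pos hs.1, Complex.norm_cpow_eq_rpow_re_of_pos h1]
  congr 2
  · simp; norm_num

lemma bp_bound {β x s e1 e2 : ℝ} (hx : 0 < x) (hs : s ∈ Ioo x 1) (h1 : -1 ≤ e1)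
    (h2 : β - 1 ≤ e2) :
    s ^ e1 * (1 - s) ^ e2 ≤ x ^ (-(1/2) : ℝ) * (s ^ (-(1/2) : ℝ) * (1 - s) ^ (β - 1)) := by
  have hs0 : 0 < s := hx.trans hs.1
  have hs1 : 0 < 1 - s := by linarith [hs.2]
  have A : s ^ e1 ≤ s ^ (-1 : ℝ) := Real.rpow_le_rpow_of_exponent_ge hs0 hs.2.le h1
  have B : (1 - s) ^ e2 ≤ (1 - s) ^ (β - 1) :=
    Real.rpow_le_rpow_of_exponent_ge hs1 (by linarith) h2
  have C : s ^ (-1 : ℝ) = s ^ (-(1/2) : ℝ) * s ^ (-(1/2) : ℝ) := by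
    rw [← Real.rpow_add hs0]; norm_num
  have D : s ^ (-(1/2) : ℝ) ≤ x ^ (-(1/2) : ℝ) :=
    Real.rpow_le_rpow_of_nonpos hx hs.1.le (by norm_num)
  rw [← mul_assoc]
  have := Real.rpow_pos_of_pos hs0 (-(1/2))
  have := Real.rpow_pos_of_pos hs0 e1
  have := Real.rpow_pos_of_pos hs1 e2
  refine mul_le_mul (A.trans ?_) B (by positivity) (by positivity)
  rw [C]
  exact mul_le_mul_of_nonneg_right D (by positivity)

lemma bp_meas (e1 e2 : ℝ) : Measurable (fun s : ℝ => s ^ e1 * (1 - s) ^ e2) := by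
  fun_prop

lemma bp_nonneg {x s e1 e2 : ℝ} (hx : 0 < x) (hs : s ∈ Ioo x 1) :
    0 < s ^ e1 * (1 - s) ^ e2 := 
  mul_pos (Real.rpow_pos_of_pos (hx.trans hs.1) _) (Real.rpow_pos_of_pos (by linarith [hs.2]) _)

lemma bp_dom {β x : ℝ} (hβ : 0 < β) (hx : 0 < x) :
    IntegrableOn (fun s : ℝ => x ^ (-(1/2) : ℝ) * (s ^ (-(1/2) : ℝ) * (1 - s) ^ (β - 1)))
      (Ioo x 1) :=
  ((bp_betaInt hβ).mono_set (Ioo_subset_Ioo_left hx.le)).const_mul _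

lemma bp_int {β x e1 e2 : ℝ} (hβ : 0 < β) (hx : 0 < x) (h1 : -1 ≤ e1) (h2 : β - 1 ≤ e2) :
    IntegrableOn (fun s : ℝ => s ^ e1 * (1 - s) ^ e2) (Ioo x 1) := by
  refine Integrable.mono' (bp_dom hβ hx) (bp_meas e1 e2).aestronglyMeasurable ?_
  refine (ae_restrict_iff' measurableSet_Ioo).2 (ae_of_all _ fun s hs => ?_)
  rw [Real.norm_of_nonneg (bp_nonneg hx hs).le]
  exact bp_bound hx hs h1 h2

lemma bp_intbound {β x e1 e2 : ℝ} (hβ : 0 < β) (hx : 0 < x) (h1 : -1 ≤ e1) (h2 : β - 1 ≤ e2) :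
    ∫ s in Ioo x 1, s ^ e1 * (1 - s) ^ e2 ≤
      x ^ (-(1/2) : ℝ) * ∫ s in Ioo (0:ℝ) 1, s ^ (-(1/2) : ℝ) * (1 - s) ^ (β - 1) := by
  calc _ ≤ ∫ s in Ioo x 1, x ^ (-(1/2) : ℝ) * (s ^ (-(1/2) : ℝ) * (1 - s) ^ (β - 1)) :=
        setIntegral_mono_on (bp_int hβ hx h1 h2) (bp_dom hβ hx) measurableSet_Ioo
          fun s hs => bp_bound hx hs h1 h2
    _ = x ^ (-(1/2) : ℝ) * ∫ s in Ioo x 1, (s ^ (-(1/2) : ℝ) * (1 - s) ^ (β - 1)) := by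
        rw [integral_const_mul]
    _ ≤ _ := by
        refine mul_le_mul_of_nonneg_left ?_ (Real.rpow_nonneg hx.le _)
        refine setIntegral_mono_set (bp_betaInt hβ) ?_
          (Ioo_subset_Ioo_left hx.le).eventuallyLE
        refine (ae_restrict_iff' measurableSet_Ioo).2 (ae_of_all _ fun s hs => ?_)
        exact mul_nonneg (Real.rpow_nonneg hs.1.le _) (Real.rpow_nonneg (by linarith [hs.2]) _)

lemma bp_anti {β x y e1 e2 : ℝ} (hβ : 0 < β) (hx : 0 < x) (h1 : -1 ≤ e1) (h2 : β - 1 ≤ e2)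
    (hxy : x ≤ y) :
    ∫ s in Ioo y 1, s ^ e1 * (1 - s) ^ e2 ≤ ∫ s in Ioo x 1, s ^ e1 * (1 - s) ^ e2 := by
  refine setIntegral_mono_set (bp_int hβ hx h1 h2) ?_ (Ioo_subset_Ioo_left hxy).eventuallyLE
  exact (ae_restrict_iff' measurableSet_Ioo).2 (ae_of_all _ fun s hs => (bp_nonneg hx hs).le)

lemma bp_santi {β x y e1 e2 : ℝ} (hβ : 0 < β) (hx : 0 < x) (h1 : -1 ≤ e1) (h2 : β - 1 ≤ e2)
    (hxy : x < y) (hy : y < 1) :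
    ∫ s in Ioo y 1, s ^ e1 * (1 - s) ^ e2 < ∫ s in Ioo x 1, s ^ e1 * (1 - s) ^ e2 := by
  have hI := bp_int hβ hx h1 h2
  rw [← Ioc_union_Ioo_eq_Ioo hxy.le hy, setIntegral_union _ measurableSet_Ioo
    (hI.mono_set _) (hI.mono_set _)]
  · have : 0 < ∫ s in Ioc x y, s ^ e1 * (1 - s) ^ e2 := by
      rw [setIntegral_pos_iff_support_of_nonneg_ae]
      · refine lt_of_lt_of_le (b := volume (Ioc x y)) (by simpa using hxy) (measure_mono ?_)
        intro s hs
        exact ⟨(bp_nonneg hx ⟨hs.1, hs.2.trans_lt hy⟩).ne', hs⟩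
      · exact (ae_restrict_iff' measurableSet_Ioc).2 
          (ae_of_all _ fun s hs => (bp_nonneg hx ⟨hs.1, hs.2.trans_lt hy⟩).le)
      · exact hI.mono_set fun s hs => ⟨hs.1, hs.2.trans_lt hy⟩
    linarith
  · rw [Set.disjoint_left]; intro s hs hs'; exact absurd hs.2 (not_le.2 hs'.1)
  · exact fun s hs => ⟨hs.1, hs.2.trans_lt hy⟩
  · exact Ioo_subset_Ioo_left hxy.le

lemma bp_expo {c : ℝ} (hc : 0 < c) {n : ℕ} (hn : 2 ≤ n) :
    -1 ≤ c / n - 1 ∧ c / 2 - 1 ≤ c * (1 - 1 / (n:ℝ)) - 1 ∧ c / 2 ≤ c - c / n := by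
  have hn' : (2:ℝ) ≤ n := by exact_mod_cast hn
  have h1 : c / n ≤ c / 2 := div_le_div_of_nonneg_left hc.le (by norm_num) hn'
  have h2 : 0 < c / n := by positivity
  have h3 : c * (1 - 1 / (n:ℝ)) = c - c / n := by ring
  rw [h3]
  refine ⟨?_, ?_, ?_⟩ <;> linarith

lemma bp_K {c : ℝ} (hc : 0 < c) {n : ℕ} (hn : 2 ≤ n) :
    (n:ℝ) * (Real.Gamma c / (Real.Gamma (c / n) * Real.Gamma (c - c / n))) =
      c * Real.Gamma c / (Real.Gamma (c / n + 1) * Real.Gamma (c - c / n)) := by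
  have hn' : (0:ℝ) < n := by positivity
  have h0 : 0 < c / n := by positivity
  rw [Real.Gamma_add_one h0.ne']
  have h1 := Real.Gamma_pos_of_pos h0
  have h2 : 0 < Real.Gamma (c - c / n) := Real.Gamma_pos_of_pos (by linarith [(bp_expo hc hn).2.2])
  field_simp

lemma bp_Lanti {c x y : ℝ} (hc : 0 < c) {n : ℕ} (hn : 2 ≤ n) (hx : 0 < x) (hxy : x ≤ y) :
    Lfun c n y ≤ Lfun c n x := by
  have hn' : (0:ℝ) < n := by positivity
  have e := bp_expo hc hn
  have h1 : 0 < Real.Gamma (c / n) := Real.Gamma_pos_of_pos (by positivity)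
  have h2 : 0 < Real.Gamma (c - c / n) := Real.Gamma_pos_of_pos (by linarith)
  have h3 := Real.Gamma_pos_of_pos hc
  exact mul_le_mul_of_nonneg_left
    (bp_anti (half_pos hc) hx e.1 e.2.1 hxy) (by positivity)

lemma bp_Gcont {s : ℝ} (hs : 0 < s) : ContinuousAt Real.Gamma s :=
  (Real.differentiableAt_Gamma fun m => by
    have : (0:ℝ) ≤ m := m.cast_nonneg
    intro h; linarith).continuousAt

lemma bp_Lbound {m M : ℝ} (hm : 0 < m) : ∃ C : ℝ, 0 < C ∧ ∀ c ∈ Icc m M, ∀ n : ℕ, 2 ≤ n →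
    ∀ x : ℝ, 0 < x → n * Lfun c n x ≤ C * x ^ (-(1/2) : ℝ) := by
  by_cases hmM : m ≤ M
  swap
  · exact ⟨1, one_pos, fun c hc => absurd (hc.1.trans hc.2) hmM⟩
  have hK : IsCompact (Icc (min (m/2) 1) (M+1)) := isCompact_Icc
  have hne : (Icc (min (m/2) 1) (M+1)).Nonempty := ⟨M, by constructor <;> linarith [min_le_left (m/2) 1]⟩
  have hδ : 0 < min (m/2) 1 := lt_min (by linarith) one_pos
  have hδ1 : min (m/2) 1 ≤ m / 2 := min_le_left _ _
  have hδ2 : min (m/2) 1 ≤ 1 := min_le_right _ _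
  have hcont : ContinuousOn Real.Gamma (Icc (min (m/2) 1) (M+1)) := fun s hs =>
    (bp_Gcont (by linarith [hs.1])).continuousWithinAt
  obtain ⟨p, hp, hpm⟩ := hK.exists_isMinOn hne hcont
  obtain ⟨q, hq, hqm⟩ := hK.exists_isMaxOn hne hcont
  set l := Real.Gamma p
  set U := Real.Gamma q
  have hl : 0 < l := Real.Gamma_pos_of_pos (by linarith [hp.1])
  have hU : 0 < U := Real.Gamma_pos_of_pos (by linarith [hq.1])
  set B := ∫ s in Ioo (0:ℝ) 1, s ^ (-(1/2) : ℝ) * (1 - s) ^ (m / 2 - 1)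
  have hB : 0 ≤ B := setIntegral_nonneg measurableSet_Ioo fun s hs =>
    mul_nonneg (Real.rpow_nonneg hs.1.le _) (Real.rpow_nonneg (by linarith [hs.2]) _)
  have hM : 0 < M := by linarith
  refine ⟨M * U / (l * l) * B + 1, by positivity, ?_⟩
  intro c hc n hn x hx
  have hc0 : 0 < c := hm.trans_le hc.1
  have hn' : (2:ℝ) ≤ n := by exact_mod_cast hn
  have h1 : c / n ≤ c / 2 := div_le_div_of_nonneg_left hc0.le (by norm_num) hn'
  have h2 : 0 < c / n := by positivity
  have e := bp_expo hc0 hn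
  have g1 : Real.Gamma c ≤ U := hqm ⟨by linarith [hc.1], by linarith [hc.2]⟩
  have g2 : l ≤ Real.Gamma (c - c/n) := hpm ⟨by linarith [hc.1], by linarith [hc.2]⟩
  have g3 : l ≤ Real.Gamma (c / n + 1) := hpm ⟨by linarith, by linarith [hc.2]⟩
  have hI := bp_intbound (half_pos hm) hx e.1 (show m / 2 - 1 ≤ c * (1 - 1 / (n:ℝ)) - 1 by
    linarith [e.2.1, hc.1])
  have hxp := Real.rpow_pos_of_pos hx (-(1/2))
  have hGc := Real.Gamma_pos_of_pos hc0
  unfold Lfun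
  rw [← mul_assoc, bp_K hc0 hn]
  calc _ ≤ (M * U / (l * l)) * (x ^ (-(1/2) : ℝ) * B) := by
        refine mul_le_mul ?_ hI ?_ (by positivity)
        · refine div_le_div₀ (by positivity) (mul_le_mul hc.2 g1 hGc.le hM.le) (by positivity) ?_
          exact mul_le_mul g3 g2 hl.le (hl.le.trans g3)
        · exact setIntegral_nonneg measurableSet_Ioo fun s hs => (bp_nonneg hx hs).le
    _ ≤ _ := by nlinarith

lemma bp_Llim {c x : ℝ} (hc : 0 < c) (hx : 0 < x) :
    Tendsto (fun n : ℕ => (n:ℝ) * Lfun c n x) atTop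
      (nhds (c * ∫ s in Ioo x 1, s ^ (-1 : ℝ) * (1 - s) ^ (c - 1))) := by
  have h0 : Tendsto (fun n : ℕ => c / (n:ℝ)) atTop (nhds 0) := tendsto_const_div_atTop_nhds_zero_nat c
  have hG := Real.Gamma_pos_of_pos hc
  have hK : Tendsto (fun n : ℕ => c * Real.Gamma c /
      (Real.Gamma (c / n + 1) * Real.Gamma (c - c / n))) atTop (nhds c) := by
    have a1 : Tendsto (fun n : ℕ => Real.Gamma (c / n + 1)) atTop (nhds 1) := by
      have := (bp_Gcont one_pos).tendsto.comp (show Tendsto (fun n : ℕ => c / (n:ℝ) + 1) atTop (nhds 1) by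
        simpa using h0.add_const 1)
      rw [Real.Gamma_one] at this
      exact this
    have a2 : Tendsto (fun n : ℕ => Real.Gamma (c - c / n)) atTop (nhds (Real.Gamma c)) :=
      (bp_Gcont hc).tendsto.comp (by simpa using h0.const_sub c)
    have := (tendsto_const_nhds (x := c * Real.Gamma c)).div (a1.mul a2) (by simpa using hG.ne')
    have e : c * Real.Gamma c / (1 * Real.Gamma c) = c := by field_simp
    rw [e] at this
    exact this
  have hI : Tendsto (fun n : ℕ => ∫ s in Ioo x 1, s ^ (c / n - 1) *
      (1 - s) ^ (c * (1 - 1 / (n : ℝ)) - 1)) atTop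
      (nhds (∫ s in Ioo x 1, s ^ (-1 : ℝ) * (1 - s) ^ (c - 1))) := by
    refine tendsto_integral_of_dominated_convergence
      (fun s : ℝ => x ^ (-(1/2) : ℝ) * (s ^ (-(1/2) : ℝ) * (1 - s) ^ (c / 2 - 1)))
      ?_ (bp_dom (half_pos hc) hx) ?_ ?_ |>.congr' (f₁ := fun n : ℕ => ∫ s in Ioo x 1,
        if 2 ≤ n then s ^ (c / n - 1) * (1 - s) ^ (c * (1 - 1 / (n : ℝ)) - 1) else 0) ?_
    · intro n
      split_ifs
      · exact (bp_meas _ _).aestronglyMeasurable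
      · exact aestronglyMeasurable_const
    · intro n
      refine (ae_restrict_iff' measurableSet_Ioo).2 (ae_of_all _ fun s hs => ?_)
      have hb := bp_nonneg (e1 := -(1/2)) (e2 := c / 2 - 1) hx hs
      have hxp := Real.rpow_pos_of_pos hx (-(1/2))
      split_ifs with hn
      · rw [Real.norm_of_nonneg (bp_nonneg hx hs).le]
        exact bp_bound hx hs (bp_expo hc hn).1 (bp_expo hc hn).2.1
      · rw [norm_zero]; exact (mul_pos hxp hb).le
    · refine (ae_restrict_iff' measurableSet_Ioo).2 (ae_of_all _ fun s hs => ?_)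
      have hs0 : 0 < s := hx.trans hs.1
      have hs1 : 0 < 1 - s := by linarith [hs.2]
      have t1 : Tendsto (fun n : ℕ => s ^ (c / (n:ℝ) - 1)) atTop (nhds (s ^ (-1 : ℝ))) :=
        (Real.continuousAt_const_rpow hs0.ne').tendsto.comp (by simpa using h0.sub_const 1)
      have t2 : Tendsto (fun n : ℕ => (1 - s) ^ (c * (1 - 1 / (n:ℝ)) - 1)) atTop
          (nhds ((1 - s) ^ (c - 1 : ℝ))) := by
        refine (Real.continuousAt_const_rpow hs1.ne').tendsto.comp ?_
        have : (fun n : ℕ => c * (1 - 1 / (n:ℝ)) - 1) = fun n : ℕ => c - c / (n:ℝ) - 1 := by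
          ext n; ring
        rw [this]
        simpa using (h0.const_sub c).sub_const 1
      refine (t1.mul t2).congr' ?_
      filter_upwards [eventually_ge_atTop 2] with n hn
      simp [hn]
    · filter_upwards [eventually_ge_atTop 2] with n hn
      simp [hn]
  refine (hK.mul hI).congr' ?_
  filter_upwards [eventually_ge_atTop 2] with n hn
  unfold Lfun
  rw [← mul_assoc, bp_K hc hn]

lemma bp_x_bound {C x r : ℝ} (hx : 0 < x) (hr : 0 < r)
    (h : r ≤ C * x ^ (-(1/2) : ℝ)) : x ≤ (C / r) ^ 2 := by
  have hy := Real.rpow_pos_of_pos hx (-(1/2))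
  have hxy : x * (x ^ (-(1/2) : ℝ)) ^ 2 = 1 := by
    rw [pow_two, ← Real.rpow_add hx]
    norm_num
    rw [Real.rpow_neg_one, mul_inv_cancel₀ hx.ne']
  set y := x ^ (-(1/2) : ℝ)
  rw [div_pow, le_div_iff₀ (by positivity)]
  have : r ^ 2 ≤ (C * y) ^ 2 := pow_le_pow_left₀ hr.le h 2
  calc x * r ^ 2 ≤ x * (C * y) ^ 2 := mul_le_mul_of_nonneg_left this hx.le
    _ = C ^ 2 * (x * y ^ 2) := by ring
    _ = C ^ 2 := by rw [hxy, mul_one]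

lemma bp_inv_lim {c a γ y : ℝ} (hc : 0 < c) (ha : 0 < a) (hγ : 0 < γ) (f : ℕ → ℝ → ℝ)
    (hf : ∀ n : ℕ, 2 ≤ n → ∀ p ∈ Ioo (0:ℝ) 1, f n p ∈ Ioo (0:ℝ) 1 ∧ Lfun c n (f n p) = p)
    (hy : y ∈ Ioo (0:ℝ) 1) (hM : Mfun c a y = γ) :
    Tendsto (fun n : ℕ => f n (γ / (a * n))) atTop (nhds y) := by
  have key : ∀ᶠ n : ℕ in atTop, 2 ≤ n ∧ f n (γ / (a * n)) ∈ Ioo (0:ℝ) 1 ∧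
      (n:ℝ) * Lfun c n (f n (γ / (a * n))) = γ / a := by
    filter_upwards [eventually_ge_atTop 2, tendsto_natCast_atTop_atTop.eventually_gt_atTop (γ / a)]
      with n hn hn2
    have hn' : (0:ℝ) < n := by positivity
    have hp : γ / (a * n) ∈ Ioo (0:ℝ) 1 := by
      refine ⟨by positivity, ?_⟩
      rw [div_lt_one (by positivity)]
      rwa [div_lt_iff₀ ha, mul_comm] at hn2
    obtain ⟨h1, h2⟩ := hf n hn _ hp
    refine ⟨hn, h1, ?_⟩
    rw [h2]; field_simp
  have hMy : c * ∫ s in Ioo y 1, s ^ (-1 : ℝ) * (1 - s) ^ (c - 1) = γ / a := by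
    rw [← hM]; unfold Mfun; field_simp
  rw [tendsto_order]
  constructor
  · intro b hb
    set x := max b (y / 2)
    have hx : 0 < x := lt_max_of_lt_right (by linarith [hy.1])
    have hxy : x < y := max_lt hb (by linarith [hy.1])
    have h1 := bp_santi hc hx (le_refl (-1)) (le_refl (c - 1)) hxy hy.2
    have h2 := mul_lt_mul_of_pos_left h1 hc
    rw [hMy] at h2
    filter_upwards [key, (bp_Llim hc hx).eventually_const_lt h2] with n ⟨hn, hfn, hL⟩ hlt
    refine (le_max_left b (y/2)).trans_lt (not_le.1 fun hle => ?_)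
    have := bp_Lanti hc hn hfn.1 hle
    have := mul_le_mul_of_nonneg_left this (Nat.cast_nonneg (α := ℝ) n)
    linarith
  · intro b hb
    set x := min b ((y + 1) / 2)
    have hx : y < x := lt_min hb (by linarith [hy.2])
    have hx1 : x < 1 := (min_le_right _ _).trans_lt (by linarith [hy.2])
    have h1 := bp_santi hc hy.1 (le_refl (-1)) (le_refl (c - 1)) hx hx1
    have h2 := mul_lt_mul_of_pos_left h1 hc
    rw [hMy] at h2
    filter_upwards [key, (bp_Llim hc (hy.1.trans hx)).eventually_lt_const h2] with n ⟨hn, hfn, hL⟩ hlt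
    refine (not_le.1 fun hle => ?_ : _ < x).trans_le (min_le_left _ _)
    have := bp_Lanti hc hn (hy.1.trans hx) hle
    have := mul_le_mul_of_nonneg_left this (Nat.cast_nonneg (α := ℝ) n)
    linarith

open ProbabilityTheory in
lemma bp_E {Ω : Type*} [MeasurableSpace Ω] (P : Measure Ω) [IsProbabilityMeasure P]
    (E : ℕ → Ω → ℝ) (hEmeas : ∀ i, Measurable (E i))
    (hElaw : ∀ i, P.map (E i) = ProbabilityTheory.expMeasure 1)
    (hind : Pairwise fun i j => IndepFun (E i) (E j) P) :
    ∀ᵐ ω ∂P, (∀ i, 0 < E i ω) ∧ ∃ δ : ℝ, 0 < δ ∧ ∀ᶠ i : ℕ in atTop,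
      δ * (i + 1 : ℕ) ≤ ∑ j ∈ Finset.range (i + 1), E j ω := by
  have hpos : ∀ i, ∀ᵐ ω ∂P, 0 < E i ω := by
    intro i
    have h0 : expMeasure 1 (Iic 0) = 0 := by
      have := isProbabilityMeasure_expMeasure (r := 1) one_pos
      have h := cdf_expMeasure_eq (r := 1) one_pos 0
      rw [cdf_eq_real] at h
      simpa [Measure.real, ENNReal.toReal_eq_zero_iff] using h
    rw [← hElaw i, Measure.map_apply (hEmeas i) measurableSet_Iic] at h0
    rw [ae_iff]
    convert h0 using 2
    ext ω; simp
  have hg : Measurable (fun x : ℝ => max 0 (min x 1)) := by fun_prop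
  set X : ℕ → Ω → ℝ := fun i ω => max 0 (min (E i ω) 1) with hX
  have hXm : ∀ i, Measurable (X i) := fun i => hg.comp (hEmeas i)
  have hXint : Integrable (X 0) P := by
    refine Integrable.of_bound (hXm 0).aestronglyMeasurable 1 (ae_of_all _ fun ω => ?_)
    rw [Real.norm_of_nonneg (le_max_left _ _)]
    exact max_le zero_le_one (min_le_right _ _)
  have hXind : Pairwise (Function.onFun (fun f g => IndepFun f g P) X) := fun i j hij =>
    (hind hij).comp hg hg
  have hXid : ∀ i, IdentDistrib (X i) (X 0) P P := fun i =>
    (IdentDistrib.mk (hEmeas i).aemeasurable (hEmeas 0).aemeasurable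
      ((hElaw i).trans (hElaw 0).symm) : IdentDistrib (E i) (E 0) P P).comp hg
  have hmean : 0 < ∫ ω, X 0 ω ∂P := by
    have hnn : 0 ≤ X 0 := fun ω => le_max_left _ _
    rw [integral_pos_iff_support_of_nonneg hnn hXint]
    have : P (Function.support (X 0)) = 1 := by
      rw [← (measure_univ : P univ = 1)]
      refine measure_congr ?_
      rw [ae_eq_univ, ← mem_ae_iff]
      filter_upwards [hpos 0] with ω hω
      have : 0 < X 0 ω := lt_max_of_lt_right (lt_min hω one_pos)
      exact this.ne'
    rw [this]; exact one_pos
  filter_upwards [strong_law_ae_real X hXint hXind hXid, ae_all_iff.2 hpos] with ω hl hp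
  refine ⟨hp, _, half_pos hmean, ?_⟩
  have h1 := (hl.comp (tendsto_add_atTop_nat 1)).eventually_const_lt (half_lt_self hmean)
  filter_upwards [h1] with i hi
  simp only [Function.comp] at hi
  rw [lt_div_iff₀ (by positivity)] at hi
  refine hi.le.trans (Finset.sum_le_sum fun j _ => ?_)
  exact max_le (hp j).le (min_le_left _ _)

/-- almost surely, the Wolpert–Ickstadt series `A(t)` converges for every
`t ∈ [0, t₀]` and the finite approximations `Aₙ` converge vaguely to `A`, i.e.
`Aₙ(t) → A(t)` at every continuity point `t` of the nondecreasing function `A`. -/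
theorem beta_process_finite_approximation
    {Ω : Type*} [MeasurableSpace Ω] (P : Measure Ω) [IsProbabilityMeasure P]
    (t₀ : ℝ) (ht₀ : 0 < t₀)
    (η : Measure ℝ) [IsFiniteMeasure η]
    (hsupp : η (Set.Icc 0 t₀)ᶜ = 0) (hatom : ∀ x : ℝ, η {x} = 0)
    (a : ℝ) (ha : a = (η Set.univ).toReal) (hapos : 0 < a)
    (c : ℝ → ℝ) (hccont : ContinuousOn c (Set.Icc 0 t₀))
    (hcpos : ∀ z ∈ Set.Icc (0 : ℝ) t₀, 0 < c z)
    (θ E : ℕ → Ω → ℝ)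
    (hθmeas : ∀ i, Measurable (θ i)) (hEmeas : ∀ i, Measurable (E i))
    (hθlaw : ∀ i, P.map (θ i) = (η Set.univ)⁻¹ • η)
    (hElaw : ∀ i, P.map (E i) = ProbabilityTheory.expMeasure 1)
    (hindep : ProbabilityTheory.iIndepFun (m := fun _ : ℕ ⊕ ℕ => Real.measurableSpace)
      (Sum.elim θ E) P)
    (Linv : ℕ → ℝ → ℝ → ℝ) (Minv : ℝ → ℝ → ℝ)
    (hLinv : ∀ n : ℕ, 2 ≤ n → ∀ z ∈ Set.Icc (0 : ℝ) t₀, ∀ p ∈ Set.Ioo (0 : ℝ) 1,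
      Linv n z p ∈ Set.Ioo (0 : ℝ) 1 ∧ Lfun (c z) n (Linv n z p) = p)
    (hLinv0 : ∀ (n : ℕ) (z p : ℝ), (1 : ℝ) ≤ p → Linv n z p = 0)
    (hMinv : ∀ z ∈ Set.Icc (0 : ℝ) t₀, ∀ γ : ℝ, 0 < γ →
      Minv z γ ∈ Set.Ioo (0 : ℝ) 1 ∧ Mfun (c z) a (Minv z γ) = γ) :
    ∀ᵐ ω ∂P,
      (∀ t ∈ Set.Icc (0 : ℝ) t₀, Summable (fun i : ℕ =>
          if θ i ω ≤ t then Minv (θ i ω) (∑ j ∈ Finset.range (i + 1), E j ω) else 0)) ∧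
      (∀ t ∈ Set.Icc (0 : ℝ) t₀,
        ContinuousAt (fun s : ℝ => ∑' i : ℕ,
            if θ i ω ≤ s then Minv (θ i ω) (∑ j ∈ Finset.range (i + 1), E j ω) else 0) t →
        Tendsto (fun n : ℕ => ∑ i ∈ Finset.range n,
            if θ i ω ≤ t then
              Linv n (θ i ω) ((∑ j ∈ Finset.range (i + 1), E j ω) / (a * n)) else 0)
          atTop (nhds (∑' i : ℕ,
            if θ i ω ≤ t then Minv (θ i ω) (∑ j ∈ Finset.range (i + 1), E j ω) else 0))) := by
  have hind : Pairwise fun i j => ProbabilityTheory.IndepFun (E i) (E j) P := by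
    intro i j hij
    exact hindep.indepFun (i := Sum.inr i) (j := Sum.inr j) (by simpa using hij)
  have hθ : ∀ i, ∀ᵐ ω ∂P, θ i ω ∈ Set.Icc (0:ℝ) t₀ := by
    intro i
    have h : P.map (θ i) (Set.Icc 0 t₀)ᶜ = 0 := by
      rw [hθlaw i]; simp [hsupp]
    rw [Measure.map_apply (hθmeas i) measurableSet_Icc.compl] at h
    exact h
  have hne : (Set.Icc (0:ℝ) t₀).Nonempty := ⟨0, le_refl 0, ht₀.le⟩
  obtain ⟨zm, hzm, hmin⟩ := isCompact_Icc.exists_isMinOn hne hccont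
  obtain ⟨zM, hzM, hmax⟩ := isCompact_Icc.exists_isMaxOn hne hccont
  obtain ⟨C, hC, hCb⟩ := bp_Lbound (m := c zm) (M := c zM) (hcpos zm hzm)
  -- bound for the inverse
  have hLb : ∀ n : ℕ, 2 ≤ n → ∀ z ∈ Set.Icc (0:ℝ) t₀, ∀ γ : ℝ, 0 < γ →
      0 ≤ Linv n z (γ / (a * n)) ∧ Linv n z (γ / (a * n)) ≤ (C / (γ / a)) ^ 2 := by
    intro n hn z hz γ hγ
    have hn' : (0:ℝ) < n := by positivity
    by_cases hp : (1:ℝ) ≤ γ / (a * n)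
    · rw [hLinv0 n z _ hp]
      exact ⟨le_refl 0, by positivity⟩
    · obtain ⟨h1, h2⟩ := hLinv n hn z hz _ ⟨by positivity, not_le.1 hp⟩
      refine ⟨h1.1.le, bp_x_bound h1.1 (by positivity) ?_⟩
      have h3 := hCb (c z) ⟨hmin hz, hmax hz⟩ n hn _ h1.1
      rw [h2] at h3
      refine le_trans (le_of_eq ?_) h3
      field_simp
  have hlim : ∀ z ∈ Set.Icc (0:ℝ) t₀, ∀ γ : ℝ, 0 < γ →
      Tendsto (fun n : ℕ => Linv n z (γ / (a * n))) atTop (nhds (Minv z γ)) := by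
    intro z hz γ hγ
    obtain ⟨h1, h2⟩ := hMinv z hz γ hγ
    exact bp_inv_lim (hcpos z hz) hapos hγ (fun n p => Linv n z p)
      (fun n hn p hp => hLinv n hn z hz p hp) h1 h2
  filter_upwards [ae_all_iff.2 hθ, bp_E P E hEmeas hElaw hind] with ω hθω ⟨hE, δ, hδ, hev⟩
  set γ : ℕ → ℝ := fun i => ∑ j ∈ Finset.range (i + 1), E j ω with hγdef
  have hγ : ∀ i, 0 < γ i := fun i => Finset.sum_pos (fun j _ => hE j) ⟨0, by simp⟩
  have hsum : Summable fun i : ℕ => (C / (γ i / a)) ^ 2 := by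
    have hs : Summable fun i : ℕ => (C * a / δ) ^ 2 * (1 / ((i + 1 : ℕ) : ℝ) ^ 2) :=
      ((summable_nat_add_iff 1).2 (Real.summable_one_div_nat_pow.2 one_lt_two)).mul_left _
    refine Summable.of_norm_bounded_eventually_nat hs ?_
    filter_upwards [hev] with i hi
    rw [Real.norm_of_nonneg (by positivity)]
    have hγi := hγ i
    have e1 : (C / (γ i / a)) ^ 2 = (C * a) ^ 2 / (γ i) ^ 2 := by field_simp
    have e2 : (C * a / δ) ^ 2 * (1 / ((i + 1 : ℕ) : ℝ) ^ 2) =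
      (C * a) ^ 2 / (δ * (i + 1 : ℕ)) ^ 2 := by field_simp
    rw [e1, e2]
    have h0 : 0 < δ * ((i + 1 : ℕ) : ℝ) := by positivity
    exact div_le_div_of_nonneg_left (by positivity) (by positivity)
      (pow_le_pow_left₀ h0.le hi 2)
  have hMb : ∀ i, Minv (θ i ω) (γ i) ≤ (C / (γ i / a)) ^ 2 := by
    intro i
    refine le_of_tendsto (hlim _ (hθω i) _ (hγ i)) ?_
    filter_upwards [eventually_ge_atTop 2] with n hn
    exact (hLb n hn _ (hθω i) _ (hγ i)).2
  constructor
  · intro t _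
    refine Summable.of_norm_bounded hsum fun i => ?_
    have hM0 := (hMinv _ (hθω i) _ (hγ i)).1.1
    split_ifs
    · rw [Real.norm_of_nonneg hM0.le]; exact hMb i
    · rw [norm_zero]; positivity
  · intro t _ _
    have hT := tendsto_tsum_of_dominated_convergence (𝓕 := atTop)
      (f := fun (n : ℕ) (i : ℕ) => if i ∈ Finset.range n then
        (if θ i ω ≤ t then Linv n (θ i ω) (γ i / (a * n)) else 0) else 0)
      (g := fun i => if θ i ω ≤ t then Minv (θ i ω) (γ i) else 0) hsum ?_ ?_
    · refine hT.congr fun n => ?_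
      rw [tsum_eq_sum (s := Finset.range n) (fun i hi => by simp only [hi, if_false])]
      exact Finset.sum_congr rfl fun i hi => by simp only [hi, if_true]; rfl
    · intro i
      have : Tendsto (fun n : ℕ => if θ i ω ≤ t then Linv n (θ i ω) (γ i / (a * n)) else 0)
          atTop (nhds (if θ i ω ≤ t then Minv (θ i ω) (γ i) else 0)) := by
        split_ifs
        · exact hlim _ (hθω i) _ (hγ i)
        · exact tendsto_const_nhds
      refine this.congr' ?_
      filter_upwards [eventually_gt_atTop i] with n hn
      simp [hn]
    · filter_upwards [eventually_ge_atTop 2] with n hn i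
      have hb := hLb n hn _ (hθω i) _ (hγ i)
      split_ifs
      · rw [Real.norm_of_nonneg hb.1]; exact hb.2
      · rw [norm_zero]; positivity
      · rw [norm_zero]; positivity
end
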